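/- arXiv:2004.04501 — 7 statements merged into one kernel-verified Lean document; each statement's English description precedes it below -/
import Mathlib

section
/- The quantity b := (2ρν / v(τ1)²) · ∫_0^{τ1} (v(τ1) − v(s))·φ(s) ds equals (νρ/α)·((4q+2)/(3q+2))·((τ1−τ0)/τ1)^{q}. -/
open MeasureTheory Real

lemma integral_const_sub_rpow (a b c : ℝ) {p : ℝ} (hp : -1 < p) :
    ∫ s in a..b, (c - s) ^ p = ((c - a) ^ (p + 1) - (c - b) ^ (p + 1)) / (p + 1) := by
  rw [intervalIntegral.integral_comp_sub_left (fun x => x ^ p), integral_rpow (Or.inl hp)]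

/-- Effective-medium quantity b of Hagan et al. for the backward-looking SABR model
with τ0 ≤ 0: b = (2ρν / v(τ1)²) ∫_0^{τ1} (v(τ1) - v(s)) φ(s) ds
             = (νρ/α)((4q+2)/(3q+2))((τ1-τ0)/τ1)^q. -/
theorem stmt_2 (τ0 τ1 q α ν ρ : ℝ)
    (hτ0 : τ0 ≤ 0) (hτ1 : 0 < τ1) (hq : 0 < q) (hα : 0 < α) (hν : 0 < ν)
    (hρ : ρ ∈ Set.Icc (-1 : ℝ) 1)
    (φ v : ℝ → ℝ)
    (hφ : ∀ t ∈ Set.Icc (0 : ℝ) τ1, φ t = α * ((τ1 - t) / (τ1 - τ0)) ^ q)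
    (hv : ∀ u, v u = ∫ s in (0:ℝ)..u, (φ s) ^ 2) :
    2 * ρ * ν / (v τ1) ^ 2 * ∫ s in (0:ℝ)..τ1, (v τ1 - v s) * φ s
      = ν * ρ / α * ((4 * q + 2) / (3 * q + 2)) * ((τ1 - τ0) / τ1) ^ q := by
  have hL : 0 < τ1 - τ0 := by linarith
  have hLq : 0 < (τ1 - τ0) ^ q := rpow_pos_of_pos hL q
  set β := α / (τ1 - τ0) ^ q with hβ
  have hφβ : ∀ t ∈ Set.Icc (0 : ℝ) τ1, φ t = β * (τ1 - t) ^ q := fun t ht => by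
    rw [hφ t ht, div_rpow (by linarith [ht.2]) hL.le, hβ]
    ring
  have hvβ : ∀ u ∈ Set.Icc (0 : ℝ) τ1,
      v u = β ^ 2 * ((τ1 ^ (2 * q + 1) - (τ1 - u) ^ (2 * q + 1)) / (2 * q + 1)) := fun u hu => by
    have hsq : Set.EqOn (fun s => φ s ^ 2) (fun s => β ^ 2 * (τ1 - s) ^ (2 * q))
        (Set.uIcc 0 u) := fun s hs => by
      rw [Set.uIcc_of_le hu.1] at hs
      have hs' : 0 ≤ τ1 - s := by linarith [hs.2, hu.2]
      simp only [hφβ s ⟨hs.1, hs.2.trans hu.2⟩, mul_pow]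
      rw [mul_comm 2 q, rpow_mul hs', rpow_two]
    rw [hv, intervalIntegral.integral_congr hsq, intervalIntegral.integral_const_mul,
      integral_const_sub_rpow _ _ _ (by linarith), sub_zero]
  have hvτ1 : v τ1 = β ^ 2 * (τ1 ^ (2 * q + 1) / (2 * q + 1)) := by
    rw [hvβ τ1 ⟨hτ1.le, le_rfl⟩, sub_self, zero_rpow (by linarith), sub_zero]
  have hint : ∫ s in (0:ℝ)..τ1, (v τ1 - v s) * φ s
      = β ^ 3 / (2 * q + 1) * (τ1 ^ (3 * q + 2) / (3 * q + 2)) := by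
    have hprod : Set.EqOn (fun s => (v τ1 - v s) * φ s)
        (fun s => β ^ 3 / (2 * q + 1) * (τ1 - s) ^ (3 * q + 1)) (Set.uIcc 0 τ1) := fun s hs => by
      rw [Set.uIcc_of_le hτ1.le] at hs
      have hs' : 0 ≤ τ1 - s := by linarith [hs.2]
      simp only [hvτ1, hvβ s hs, hφβ s hs]
      rw [show 3 * q + 1 = (2 * q + 1) + q by ring,
        rpow_add_of_nonneg hs' (by linarith) hq.le]
      ring
    rw [intervalIntegral.integral_congr hprod, intervalIntegral.integral_const_mul,
      integral_const_sub_rpow _ _ _ (by linarith), sub_zero, sub_self,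
      zero_rpow (by linarith), sub_zero, show 3 * q + 1 + 1 = 3 * q + 2 by ring]
  have hT : 0 < τ1 ^ q := rpow_pos_of_pos hτ1 q
  have hpow_two : τ1 ^ (2 * q + 1) = (τ1 ^ q) ^ 2 * τ1 := by
    rw [rpow_add_one hτ1.ne', mul_comm 2 q, rpow_mul hτ1.le, rpow_two]
  have hpow_three : τ1 ^ (3 * q + 2) = (τ1 ^ q) ^ 3 * τ1 ^ 2 := by
    rw [rpow_add hτ1, mul_comm 3 q, rpow_mul hτ1.le, rpow_two, ← rpow_natCast (τ1 ^ q) 3]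
    norm_num
  rw [hint, hvτ1, hpow_two, hpow_three, div_rpow hL.le hτ1.le, hβ]
  field_simp
  ring
end

section
/- The quantity c := (3ν²/v(τ1)³)·∫_0^{τ1}(v(τ1) − v(s))² ds + (9/v(τ1)³)·∫_0^{τ1} w(s)²·φ(s)² ds − 3b², where b = (νρ/α)·((4q+2)/(3q+2))·((τ1−τ0)/τ1)^{q}, equals (ν²/α²)·((τ1−τ0)/τ1)^{2q}·(2q+1)²·ζ. (A key intermediate simplification is that 1/(2q+1) − 2/(3q+2) + 1/(4q+3) = 2(q+1)²/((2q+1)(3q+2)(4q+3)).) -/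
open MeasureTheory Real

theorem integral_sub_rpow (T u : ℝ) {p : ℝ} (hp : 0 < p) :
    ∫ s in (0:ℝ)..u, (T - s) ^ p = (T ^ (p + 1) - (T - u) ^ (p + 1)) / (p + 1) := by
  rw [intervalIntegral.integral_comp_sub_left (fun x => x ^ p) T,
    integral_rpow (Or.inl (by linarith)), sub_zero]

theorem intervalIntegrable_sub_rpow (T a b : ℝ) {p : ℝ} (hp : 0 < p) :
    IntervalIntegrable (fun s => (T - s) ^ p) volume a b :=
  ((continuous_const.sub continuous_id).rpow_const fun _ => Or.inr hp.le).intervalIntegrable a b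

/-- Integral of the square of `T ^ (q + 1) - (T - s) ^ (q + 1)` against `(T - s) ^ (2 * q)`. -/
theorem integral_sq_sub_mul_rpow {T q : ℝ} (hT : 0 < T) (hq : 0 < q) :
    ∫ s in (0:ℝ)..T, (T ^ (q + 1) - (T - s) ^ (q + 1)) ^ 2 * (T - s) ^ (2 * q)
      = T ^ (4 * q + 3) * (1 / (2 * q + 1) - 2 / (3 * q + 2) + 1 / (4 * q + 3)) := by
  have expand : Set.EqOn
      (fun s => (T ^ (q + 1) - (T - s) ^ (q + 1)) ^ 2 * (T - s) ^ (2 * q))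
      (fun s => (T ^ (q + 1)) ^ 2 * (T - s) ^ (2 * q)
        - 2 * T ^ (q + 1) * (T - s) ^ (3 * q + 1) + (T - s) ^ (4 * q + 2))
      (Set.uIcc 0 T) := by
    intro s hs
    rw [Set.uIcc_of_le hT.le] at hs
    have hx : 0 ≤ T - s := sub_nonneg.2 hs.2
    have h₁ : (T - s) ^ (3 * q + 1) = (T - s) ^ (q + 1) * (T - s) ^ (2 * q) := by
      rw [← rpow_add_of_nonneg hx (by positivity) (by positivity)]
      ring_nf
    have h₂ : (T - s) ^ (4 * q + 2) = ((T - s) ^ (q + 1)) ^ 2 * (T - s) ^ (2 * q) := by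
      rw [pow_two, ← rpow_add_of_nonneg hx (by positivity) (by positivity),
        ← rpow_add_of_nonneg hx (by positivity) (by positivity)]
      ring_nf
    simp only [h₁, h₂]
    ring
  have i₁ := (intervalIntegrable_sub_rpow T 0 T (p := 2 * q) (by positivity)).const_mul
    ((T ^ (q + 1)) ^ 2)
  have i₂ := (intervalIntegrable_sub_rpow T 0 T (p := 3 * q + 1) (by positivity)).const_mul
    (2 * T ^ (q + 1))
  have i₃ := intervalIntegrable_sub_rpow T 0 T (p := 4 * q + 2) (by positivity)
  rw [intervalIntegral.integral_congr expand, intervalIntegral.integral_add (i₁.sub i₂) i₃,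
    intervalIntegral.integral_sub i₁ i₂, intervalIntegral.integral_const_mul,
    intervalIntegral.integral_const_mul, integral_sub_rpow _ _ (by positivity),
    integral_sub_rpow _ _ (by positivity), integral_sub_rpow _ _ (by positivity), sub_self,
    zero_rpow (by positivity), zero_rpow (by positivity), zero_rpow (by positivity)]
  have h₁ : T ^ (4 * q + 3) = (T ^ (q + 1)) ^ 2 * T ^ (2 * q + 1) := by
    rw [pow_two, ← rpow_add hT, ← rpow_add hT]
    ring_nf
  have h₂ : T ^ (4 * q + 3) = T ^ (q + 1) * T ^ (3 * q + 1 + 1) := by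
    rw [← rpow_add hT]
    ring_nf
  have e₂ : 3 * q + 1 + 1 = 3 * q + 2 := by ring
  have e₃ : 4 * q + 2 + 1 = 4 * q + 3 := by ring
  rw [e₂] at h₂ ⊢
  rw [e₃]
  linear_combination (-1 / (2 * q + 1)) * h₁ + (2 / (3 * q + 2)) * h₂

/-- Effective-medium quantity c of Hagan et al. for the backward-looking SABR model
with τ0 ≤ 0, together with the key partial-fraction simplification
1/(2q+1) - 2/(3q+2) + 1/(4q+3) = 2(q+1)²/((2q+1)(3q+2)(4q+3)). -/
theorem stmt_3 (τ0 τ1 q α ν ρ ζ b : ℝ)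
    (hτ0 : τ0 ≤ 0) (hτ1 : 0 < τ1) (hq : 0 < q) (hα : 0 < α) (hν : 0 < ν)
    (hρ : ρ ∈ Set.Icc (-1 : ℝ) 1)
    (hζ : ζ = 3 / (4 * q + 3) * (1 / (2 * q + 1) + ρ ^ 2 * (2 * q) / (3 * q + 2) ^ 2))
    (hb : b = ν * ρ / α * ((4 * q + 2) / (3 * q + 2)) * ((τ1 - τ0) / τ1) ^ q)
    (φ v w : ℝ → ℝ)
    (hφ : ∀ t ∈ Set.Icc (0 : ℝ) τ1, φ t = α * ((τ1 - t) / (τ1 - τ0)) ^ q)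
    (hv : ∀ u, v u = ∫ s in (0:ℝ)..u, (φ s) ^ 2)
    (hw : ∀ u, w u = ρ * ν * ∫ s in (0:ℝ)..u, φ s) :
    (1 / (2 * q + 1) - 2 / (3 * q + 2) + 1 / (4 * q + 3)
        = 2 * (q + 1) ^ 2 / ((2 * q + 1) * (3 * q + 2) * (4 * q + 3)))
    ∧ (3 * ν ^ 2 / (v τ1) ^ 3 * (∫ s in (0:ℝ)..τ1, (v τ1 - v s) ^ 2)
        + 9 / (v τ1) ^ 3 * (∫ s in (0:ℝ)..τ1, (w s) ^ 2 * (φ s) ^ 2)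
        - 3 * b ^ 2
      = ν ^ 2 / α ^ 2 * ((τ1 - τ0) / τ1) ^ (2 * q) * (2 * q + 1) ^ 2 * ζ) := by
  have partial_fraction : 1 / (2 * q + 1) - 2 / (3 * q + 2) + 1 / (4 * q + 3)
      = 2 * (q + 1) ^ 2 / ((2 * q + 1) * (3 * q + 2) * (4 * q + 3)) := by
    field_simp
    ring
  refine ⟨partial_fraction, ?_⟩
  have hD : 0 < τ1 - τ0 := by linarith
  obtain ⟨k, hk⟩ : ∃ k, k = α / (τ1 - τ0) ^ q := ⟨_, rfl⟩
  have hDq : 0 < (τ1 - τ0) ^ q := rpow_pos_of_pos hD q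
  have hk0 : 0 < k := hk ▸ div_pos hα hDq
  have φ_eq : ∀ t ∈ Set.Icc (0 : ℝ) τ1, φ t = k * (τ1 - t) ^ q := by
    intro t ht
    rw [hφ t ht, div_rpow (sub_nonneg.2 ht.2) hD.le, hk]
    ring
  have φ_sq : ∀ t ∈ Set.Icc (0 : ℝ) τ1, φ t ^ 2 = k ^ 2 * (τ1 - t) ^ (2 * q) := by
    intro t ht
    rw [φ_eq t ht, mul_pow, two_mul, pow_two ((τ1 - t) ^ q),
      rpow_add_of_nonneg (sub_nonneg.2 ht.2) hq.le hq.le]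
  have uIcc_sub : ∀ u ∈ Set.Icc (0 : ℝ) τ1, Set.uIcc 0 u ⊆ Set.Icc 0 τ1 := by
    intro u hu
    rw [Set.uIcc_of_le hu.1]
    exact Set.Icc_subset_Icc_right hu.2
  have v_eq : ∀ u ∈ Set.Icc (0 : ℝ) τ1,
      v u = k ^ 2 * ((τ1 ^ (2 * q + 1) - (τ1 - u) ^ (2 * q + 1)) / (2 * q + 1)) := by
    intro u hu
    rw [hv, intervalIntegral.integral_congr fun s hs => φ_sq s (uIcc_sub u hu hs),
      intervalIntegral.integral_const_mul, integral_sub_rpow _ _ (by positivity)]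
  have w_eq : ∀ u ∈ Set.Icc (0 : ℝ) τ1,
      w u = ρ * ν * (k * ((τ1 ^ (q + 1) - (τ1 - u) ^ (q + 1)) / (q + 1))) := by
    intro u hu
    rw [hw, intervalIntegral.integral_congr fun s hs => φ_eq s (uIcc_sub u hu hs),
      intervalIntegral.integral_const_mul, integral_sub_rpow _ _ hq]
  have hmem : τ1 ∈ Set.Icc (0 : ℝ) τ1 := ⟨hτ1.le, le_rfl⟩
  have v_end : v τ1 = k ^ 2 * (τ1 ^ (2 * q + 1) / (2 * q + 1)) := by
    rw [v_eq τ1 hmem, sub_self, zero_rpow (by positivity), sub_zero]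
  have integral_v : ∫ s in (0:ℝ)..τ1, (v τ1 - v s) ^ 2
      = (k ^ 2 / (2 * q + 1)) ^ 2 * (τ1 ^ (4 * q + 3) / (4 * q + 3)) := by
    have hcongr : Set.EqOn (fun s => (v τ1 - v s) ^ 2)
        (fun s => (k ^ 2 / (2 * q + 1)) ^ 2 * (τ1 - s) ^ (4 * q + 2)) (Set.uIcc 0 τ1) := by
      intro s hs
      have hs' := uIcc_sub τ1 hmem hs
      have hx : (τ1 - s) ^ (4 * q + 2) = ((τ1 - s) ^ (2 * q + 1)) ^ 2 := by
        rw [pow_two, ← rpow_add_of_nonneg (sub_nonneg.2 hs'.2) (by positivity) (by positivity)]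
        ring_nf
      simp only [v_end, v_eq s hs', hx]
      ring
    have e : 4 * q + 2 + 1 = 4 * q + 3 := by ring
    rw [intervalIntegral.integral_congr hcongr, intervalIntegral.integral_const_mul,
      integral_sub_rpow _ _ (by positivity), sub_self, zero_rpow (by positivity), sub_zero, e]
  have integral_w : ∫ s in (0:ℝ)..τ1, w s ^ 2 * φ s ^ 2
      = (ρ * ν * k / (q + 1)) ^ 2 * k ^ 2 * (τ1 ^ (4 * q + 3)
        * (2 * (q + 1) ^ 2 / ((2 * q + 1) * (3 * q + 2) * (4 * q + 3)))) := by
    have hcongr : Set.EqOn (fun s => w s ^ 2 * φ s ^ 2)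
        (fun s => (ρ * ν * k / (q + 1)) ^ 2 * k ^ 2
          * ((τ1 ^ (q + 1) - (τ1 - s) ^ (q + 1)) ^ 2 * (τ1 - s) ^ (2 * q)))
        (Set.uIcc 0 τ1) := by
      intro s hs
      have hs' := uIcc_sub τ1 hmem hs
      simp only [w_eq s hs', φ_sq s hs']
      ring
    rw [intervalIntegral.integral_congr hcongr, intervalIntegral.integral_const_mul,
      integral_sq_sub_mul_rpow hτ1 hq, partial_fraction]
  have hP : 0 < τ1 ^ q := rpow_pos_of_pos hτ1 q
  have pow_two_q : τ1 ^ (2 * q + 1) = (τ1 ^ q) ^ 2 * τ1 := by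
    rw [rpow_add_one hτ1.ne', mul_comm 2 q, rpow_mul hτ1.le, rpow_two]
  have pow_four_q : τ1 ^ (4 * q + 3) = (τ1 ^ q) ^ 4 * τ1 ^ 3 := by
    rw [rpow_add hτ1, mul_comm 4 q, rpow_mul hτ1.le]
    norm_cast
  have ratio_sq : ((τ1 - τ0) / τ1) ^ (2 * q) = (((τ1 - τ0) / τ1) ^ q) ^ 2 := by
    rw [mul_comm 2 q, rpow_mul (by positivity), rpow_two]
  rw [integral_v, integral_w, v_end, hb, hζ, ratio_sq, pow_two_q, pow_four_q,
    div_rpow hD.le hτ1.le, hk]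
  generalize τ1 ^ q = P at *
  generalize (τ1 - τ0) ^ q = D at *
  field_simp
  ring
end

section
/- Define b = (νρ/α)·((4q+2)/(3q+2))·((τ1−τ0)/τ1)^{q}, c = (ν²/α²)·((τ1−τ0)/τ1)^{2q}·(2q+1)²·ζ, Δ² = (α²/(2q+1))·(τ1/(τ1−τ0))^{2q}, and G = ν²/(Δ²(q+1)) − c. Then c > 0, and the effective SABR parameters of Theorem 1 are obtained: ν̂² := Δ²·c = ν²·ζ·(2q+1); ρ̂ := b/√c = 2ρ/(√ζ·(3q+2)); and α̂² := Δ²·exp(Δ²·G·τ1/2) = (α²/(2q+1))·(τ1/(τ1−τ0))^{2q}·exp((ν²/(q+1) − ν̂²)·τ1/2). -/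
open Real

/-- Combining the effective-medium quantities b, c, Δ², G yields the backward-looking
effective SABR parameters of Theorem 1 of the paper (case τ0 ≤ 0):
ν̂² = Δ²c = ν²ζ(2q+1), ρ̂ = b/√c = 2ρ/(√ζ(3q+2)),
α̂² = Δ² exp(Δ²Gτ1/2) = (α²/(2q+1))(τ1/(τ1-τ0))^{2q} exp((ν²/(q+1) - ν̂²)τ1/2). -/
theorem stmt_5 (τ0 τ1 q α ν ρ ζ b c D2 G : ℝ)
    (hτ0 : τ0 ≤ 0) (hτ1 : 0 < τ1) (hq : 0 < q) (hα : 0 < α) (hν : 0 < ν)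
    (hρ : ρ ∈ Set.Icc (-1 : ℝ) 1)
    (hζ : ζ = 3 / (4 * q + 3) * (1 / (2 * q + 1) + ρ ^ 2 * (2 * q) / (3 * q + 2) ^ 2))
    (hb : b = ν * ρ / α * ((4 * q + 2) / (3 * q + 2)) * ((τ1 - τ0) / τ1) ^ q)
    (hc : c = ν ^ 2 / α ^ 2 * ((τ1 - τ0) / τ1) ^ (2 * q) * (2 * q + 1) ^ 2 * ζ)
    (hD2 : D2 = α ^ 2 / (2 * q + 1) * (τ1 / (τ1 - τ0)) ^ (2 * q))
    (hG : G = ν ^ 2 / (D2 * (q + 1)) - c) :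
    0 < c
    ∧ D2 * c = ν ^ 2 * ζ * (2 * q + 1)
    ∧ b / Real.sqrt c = 2 * ρ / (Real.sqrt ζ * (3 * q + 2))
    ∧ D2 * Real.exp (D2 * G * τ1 / 2)
        = α ^ 2 / (2 * q + 1) * (τ1 / (τ1 - τ0)) ^ (2 * q)
            * Real.exp ((ν ^ 2 / (q + 1) - ν ^ 2 * ζ * (2 * q + 1)) * τ1 / 2) := by
  have hζ_pos : 0 < ζ := by rw [hζ]; positivity
  have hτ : 0 < τ1 - τ0 := by linarith
  have hr : 0 < ((τ1 - τ0) / τ1) ^ q := by positivity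
  have hr2 : ((τ1 - τ0) / τ1) ^ (2 * q) = (((τ1 - τ0) / τ1) ^ q) ^ 2 := by
    rw [mul_comm, Real.rpow_mul (by positivity), Real.rpow_two]
  have hinv : (τ1 / (τ1 - τ0)) ^ (2 * q) = ((((τ1 - τ0) / τ1) ^ q) ^ 2)⁻¹ := by
    rw [← hr2, ← Real.inv_rpow (by positivity), inv_div]
  have hD2_pos : 0 < D2 := by rw [hD2]; positivity
  have hDc : D2 * c = ν ^ 2 * ζ * (2 * q + 1) := by
    rw [hD2, hc, hinv, hr2]
    field_simp
  have hsqrt : √c = ν / α * ((τ1 - τ0) / τ1) ^ q * (2 * q + 1) * √ζ := by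
    have hsq : c = (ν / α * ((τ1 - τ0) / τ1) ^ q * (2 * q + 1)) ^ 2 * ζ := by
      rw [hc, hr2]; ring
    rw [hsq, Real.sqrt_mul (by positivity), Real.sqrt_sq (by positivity)]
  refine ⟨by rw [hc]; positivity, hDc, ?_, ?_⟩
  · have hsζ : 0 < √ζ := Real.sqrt_pos.2 hζ_pos
    rw [hsqrt, hb]
    generalize ((τ1 - τ0) / τ1) ^ q = r at hr
    field_simp
    ring
  · have hDG : D2 * G = ν ^ 2 / (q + 1) - ν ^ 2 * ζ * (2 * q + 1) := by
      rw [hG, mul_sub, hDc]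
      field_simp
    rw [hDG, ← hD2]
end

section
/- The quantity b := (2ρν / v(τ1)²) · ∫_0^{τ1} (v(τ1) − v(s))·φ(s) ds equals (νρ/α)·(2q+1)·(3τ² + 2qτ0² + τ1²)/(2τ²·(3q+2)), where τ = 2qτ0 + τ1. -/
open MeasureTheory Real

/-- Integral of a normalised power from `a` to the zero `b` of its base. -/
lemma integral_sub_div_rpow (a b d p : ℝ) (hd : d ≠ 0) (hp : 0 ≤ p) :
    ∫ s in a..b, ((b - s) / d) ^ p = d / (p + 1) * ((b - a) / d) ^ (p + 1) := by
  rw [intervalIntegral.integral_comp_sub_left (fun x => (x / d) ^ p) b,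
    intervalIntegral.integral_comp_div (fun x => x ^ p) hd,
    integral_rpow (Or.inl (by linarith)), sub_self, zero_div,
    Real.zero_rpow (by linarith), smul_eq_mul]
  ring

/-- Effective-medium quantity b of Hagan et al. for the backward-looking SABR model
with τ0 ≥ 0: b = (2ρν / v(τ1)²) ∫_0^{τ1} (v(τ1) - v(s)) φ(s) ds
             = (νρ/α)(2q+1)(3τ² + 2qτ0² + τ1²)/(2τ²(3q+2)), where τ = 2qτ0 + τ1. -/
theorem stmt_8 (τ0 τ1 q α ν ρ τ : ℝ)
    (hτ0 : 0 ≤ τ0) (hτ01 : τ0 < τ1) (hq : 0 < q) (hα : 0 < α) (hν : 0 < ν)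
    (hρ : ρ ∈ Set.Icc (-1 : ℝ) 1)
    (hτ : τ = 2 * q * τ0 + τ1)
    (φ v : ℝ → ℝ)
    (hφ1 : ∀ t ∈ Set.Icc (0 : ℝ) τ0, φ t = α)
    (hφ2 : ∀ t ∈ Set.Icc τ0 τ1, φ t = α * ((τ1 - t) / (τ1 - τ0)) ^ q)
    (hv : ∀ u, v u = ∫ s in (0:ℝ)..u, (φ s) ^ 2) :
    2 * ρ * ν / (v τ1) ^ 2 * ∫ s in (0:ℝ)..τ1, (v τ1 - v s) * φ s
      = ν * ρ / α * (2 * q + 1) * (3 * τ ^ 2 + 2 * q * τ0 ^ 2 + τ1 ^ 2)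
          / (2 * τ ^ 2 * (3 * q + 2)) := by
  have hd : 0 < τ1 - τ0 := sub_pos.2 hτ01
  have hd0 : τ1 - τ0 ≠ 0 := hd.ne'
  have h0 : Set.uIcc 0 τ0 = Set.Icc 0 τ0 := Set.uIcc_of_le hτ0
  have h01 : Set.uIcc τ0 τ1 = Set.Icc τ0 τ1 := Set.uIcc_of_le hτ01.le
  have hbase : ∀ s ∈ Set.Icc τ0 τ1, 0 ≤ (τ1 - s) / (τ1 - τ0) := fun s hs =>
    div_nonneg (sub_nonneg.2 hs.2) hd.le
  have hcont : ∀ p : ℝ, 0 ≤ p → Continuous fun s : ℝ => ((τ1 - s) / (τ1 - τ0)) ^ p :=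
    fun p hp => (by fun_prop : Continuous fun s : ℝ => (τ1 - s) / (τ1 - τ0)).rpow_const
      fun _ => Or.inr hp
  have hsq : ∀ s ∈ Set.Icc τ0 τ1, φ s ^ 2 = α ^ 2 * ((τ1 - s) / (τ1 - τ0)) ^ (2 * q) := by
    intro s hs
    rw [hφ2 s hs, mul_pow, mul_comm 2 q, Real.rpow_mul (hbase s hs), Real.rpow_two]
  have hint0 : IntervalIntegrable (fun s => φ s ^ 2) volume 0 τ0 := by
    refine ContinuousOn.intervalIntegrable ?_
    rw [h0]
    exact continuousOn_const.congr fun s hs => by rw [hφ1 s hs]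
  have hint1 : IntervalIntegrable (fun s => φ s ^ 2) volume τ0 τ1 := by
    refine ContinuousOn.intervalIntegrable ?_
    rw [h01]
    exact ((hcont (2 * q) (by linarith)).const_mul (α ^ 2)).continuousOn.congr hsq
  have hint : IntervalIntegrable (fun s => φ s ^ 2) volume 0 τ1 := hint0.trans hint1
  have hvdiff : ∀ s ∈ Set.Icc 0 τ1, v τ1 - v s = ∫ x in s..τ1, φ x ^ 2 := by
    intro s hs
    rw [hv, hv]
    refine intervalIntegral.integral_interval_sub_left hint (hint.mono_set ?_)
    rw [Set.uIcc_of_le hs.1, Set.uIcc_of_le (hs.1.trans hs.2)]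
    exact Set.Icc_subset_Icc_right hs.2
  have hvtail : ∀ s ∈ Set.Icc τ0 τ1, v τ1 - v s =
      α ^ 2 * ((τ1 - τ0) / (2 * q + 1) * ((τ1 - s) / (τ1 - τ0)) ^ (2 * q + 1)) := by
    intro s hs
    rw [hvdiff s ⟨hτ0.trans hs.1, hs.2⟩,
      ← integral_sub_div_rpow s τ1 _ (2 * q) hd0 (by linarith),
      ← intervalIntegral.integral_const_mul]
    refine intervalIntegral.integral_congr fun x hx => hsq x ?_
    rw [Set.uIcc_of_le hs.2] at hx
    exact ⟨hs.1.trans hx.1, hx.2⟩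
  have hvhead : ∀ s ∈ Set.Icc 0 τ0, v s = α ^ 2 * s := by
    intro s hs
    rw [hv, intervalIntegral.integral_congr (g := fun _ => α ^ 2)]
    · simp [mul_comm]
    · intro x hx
      rw [Set.uIcc_of_le hs.1] at hx
      simp only [hφ1 x ⟨hx.1, hx.2.trans hs.2⟩]
  have hq1 : 2 * q + 1 ≠ 0 := by positivity
  have hq2 : 3 * q + 2 ≠ 0 := by positivity
  have hvτ1 : v τ1 = α ^ 2 * τ / (2 * q + 1) := by
    have h := hvtail τ0 ⟨le_rfl, hτ01.le⟩
    rw [div_self hd0, Real.one_rpow, hvhead τ0 ⟨hτ0, le_rfl⟩] at h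
    rw [eq_add_of_sub_eq h, hτ]
    field_simp
    ring
  have hhead : Set.EqOn (fun s => (v τ1 - v s) * φ s)
      (fun s => v τ1 * α - α ^ 3 * s) (Set.Icc 0 τ0) := by
    intro s hs
    simp only [hvhead s hs, hφ1 s hs]
    ring
  have htail : Set.EqOn (fun s => (v τ1 - v s) * φ s)
      (fun s => α ^ 3 * (τ1 - τ0) / (2 * q + 1) * ((τ1 - s) / (τ1 - τ0)) ^ (3 * q + 1))
      (Set.Icc τ0 τ1) := by
    intro s hs
    have hpow : ((τ1 - s) / (τ1 - τ0)) ^ (3 * q + 1) =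
        ((τ1 - s) / (τ1 - τ0)) ^ (2 * q + 1) * ((τ1 - s) / (τ1 - τ0)) ^ q := by
      rw [← Real.rpow_add_of_nonneg (hbase s hs) (by linarith) hq.le]
      ring_nf
    simp only [hvtail s hs, hφ2 s hs, hpow]
    ring
  have hI0 : ∫ s in (0:ℝ)..τ0, (v τ1 - v s) * φ s = v τ1 * α * τ0 - α ^ 3 * τ0 ^ 2 / 2 := by
    rw [intervalIntegral.integral_congr (h0 ▸ hhead), intervalIntegral.integral_sub
      (by simp) (Continuous.intervalIntegrable (by fun_prop) _ _),
      intervalIntegral.integral_const, intervalIntegral.integral_const_mul, integral_id]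
    simp only [smul_eq_mul]
    ring
  have hI1 : ∫ s in τ0..τ1, (v τ1 - v s) * φ s =
      α ^ 3 * (τ1 - τ0) ^ 2 / ((2 * q + 1) * (3 * q + 2)) := by
    rw [intervalIntegral.integral_congr (h01 ▸ htail), intervalIntegral.integral_const_mul,
      integral_sub_div_rpow _ _ _ _ hd0 (by linarith), div_self hd0, Real.one_rpow,
      show 3 * q + 1 + 1 = 3 * q + 2 by ring]
    field_simp
  have hii0 : IntervalIntegrable (fun s => (v τ1 - v s) * φ s) volume 0 τ0 := by
    refine ContinuousOn.intervalIntegrable ?_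
    rw [h0]
    exact ContinuousOn.congr (by fun_prop) hhead
  have hii1 : IntervalIntegrable (fun s => (v τ1 - v s) * φ s) volume τ0 τ1 := by
    refine ContinuousOn.intervalIntegrable ?_
    rw [h01]
    exact ((hcont (3 * q + 1) (by linarith)).const_mul _).continuousOn.congr htail
  have hτpos : 0 < τ := by
    rw [hτ]
    have : 0 < τ1 := hτ0.trans_lt hτ01
    positivity
  rw [← intervalIntegral.integral_add_adjacent_intervals hii0 hii1, hI0, hI1, hvτ1]
  field_simp
  rw [hτ]
  ring
end

section
/- The quantity c := (3ν²/v(τ1)³)·∫_0^{τ1}(v(τ1) − v(s))² ds + (9/v(τ1)³)·∫_0^{τ1} w(s)²·φ(s)² ds − 3b², where b = (νρ/α)·(2q+1)·(3τ² + 2qτ0² + τ1²)/(2τ²·(3q+2)), equals (ν²/α²)·γ·(2q+1)²/τ⁴. -/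
open MeasureTheory Real

/-- Integral of a function that agrees with continuous functions on two adjacent intervals. -/
lemma integral_eq_add_of_eqOn_Icc {f g₁ g₂ : ℝ → ℝ} {a c d : ℝ} (hac : a ≤ c) (hcd : c ≤ d)
    (hg₁ : Continuous g₁) (hg₂ : Continuous g₂)
    (h₁ : ∀ t ∈ Set.Icc a c, f t = g₁ t) (h₂ : ∀ t ∈ Set.Icc c d, f t = g₂ t) :
    ∫ t in a..d, f t = (∫ t in a..c, g₁ t) + ∫ t in c..d, g₂ t := by
  have e₁ : Set.EqOn f g₁ (Set.uIcc a c) := by rwa [Set.uIcc_of_le hac]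
  have e₂ : Set.EqOn f g₂ (Set.uIcc c d) := by rwa [Set.uIcc_of_le hcd]
  rw [← intervalIntegral.integral_congr e₁, ← intervalIntegral.integral_congr e₂,
    intervalIntegral.integral_add_adjacent_intervals]
  · exact (hg₁.intervalIntegrable a c).congr fun t ht => (e₁ (Set.uIoc_subset_uIcc ht)).symm
  · exact (hg₂.intervalIntegrable c d).congr fun t ht => (e₂ (Set.uIoc_subset_uIcc ht)).symm

lemma continuous_sub_div_rpow (τ1 D : ℝ) {p : ℝ} (hp : 0 ≤ p) :
    Continuous fun t : ℝ => ((τ1 - t) / D) ^ p :=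
  ((continuous_const.sub continuous_id).div_const D).rpow_const fun _ => Or.inr hp

lemma integral_sub_div_rpow_s9 {τ0 τ1 p : ℝ} (h : τ0 < τ1) (hp : 0 ≤ p) (u : ℝ) :
    ∫ t in τ0..u, ((τ1 - t) / (τ1 - τ0)) ^ p
      = (τ1 - τ0) / (p + 1) * (1 - ((τ1 - u) / (τ1 - τ0)) ^ (p + 1)) := by
  have hD : τ1 - τ0 ≠ 0 := (sub_pos.2 h).ne'
  have hp1 : p + 1 ≠ 0 := by positivity
  have hderiv : ∀ t ∈ Set.uIcc τ0 u,
      HasDerivAt (fun t => -((τ1 - τ0) / (p + 1)) * ((τ1 - t) / (τ1 - τ0)) ^ (p + 1))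
        (((τ1 - t) / (τ1 - τ0)) ^ p) t := by
    intro t _
    have h1 : HasDerivAt (fun t => (τ1 - t) / (τ1 - τ0)) (-1 / (τ1 - τ0)) t :=
      ((hasDerivAt_id t).const_sub τ1).div_const _
    have h2 := (h1.rpow_const (p := p + 1) (Or.inr (by linarith))).const_mul
      (-((τ1 - τ0) / (p + 1)))
    refine h2.congr_deriv ?_
    rw [add_sub_cancel_right]
    field_simp
  rw [intervalIntegral.integral_eq_sub_of_hasDerivAt hderiv
    ((continuous_sub_div_rpow τ1 _ hp).intervalIntegrable _ _), div_self hD, one_rpow]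
  ring

lemma integral_sub_div_rpow_full {τ0 τ1 p : ℝ} (h : τ0 < τ1) (hp : 0 ≤ p) :
    ∫ t in τ0..τ1, ((τ1 - t) / (τ1 - τ0)) ^ p = (τ1 - τ0) / (p + 1) := by
  rw [integral_sub_div_rpow_s9 h hp, sub_self, zero_div, zero_rpow (by positivity)]
  ring

/-- Effective-medium quantity c of Hagan et al. for the backward-looking SABR model
with τ0 ≥ 0: c = (ν²/α²)γ(2q+1)²/τ⁴. -/
theorem stmt_9 (τ0 τ1 q α ν ρ τ γ b : ℝ)
    (hτ0 : 0 ≤ τ0) (hτ01 : τ0 < τ1) (hq : 0 < q) (hα : 0 < α) (hν : 0 < ν)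
    (hρ : ρ ∈ Set.Icc (-1 : ℝ) 1)
    (hτ : τ = 2 * q * τ0 + τ1)
    (hγ : γ = τ * (2 * τ ^ 3 + τ1 ^ 3 + (4 * q ^ 2 - 2 * q) * τ0 ^ 3 + 6 * q * τ0 ^ 2 * τ1)
            / ((4 * q + 3) * (2 * q + 1))
        + 3 * q * ρ ^ 2 * (τ1 - τ0) ^ 2
            * (3 * τ ^ 2 - τ1 ^ 2 + 5 * q * τ0 ^ 2 + 4 * τ0 * τ1)
            / ((4 * q + 3) * (3 * q + 2) ^ 2))
    (hb : b = ν * ρ / α * (2 * q + 1) * (3 * τ ^ 2 + 2 * q * τ0 ^ 2 + τ1 ^ 2)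
            / (2 * τ ^ 2 * (3 * q + 2)))
    (φ v w : ℝ → ℝ)
    (hφ1 : ∀ t ∈ Set.Icc (0 : ℝ) τ0, φ t = α)
    (hφ2 : ∀ t ∈ Set.Icc τ0 τ1, φ t = α * ((τ1 - t) / (τ1 - τ0)) ^ q)
    (hv : ∀ u, v u = ∫ s in (0:ℝ)..u, (φ s) ^ 2)
    (hw : ∀ u, w u = ρ * ν * ∫ s in (0:ℝ)..u, φ s) :
    3 * ν ^ 2 / (v τ1) ^ 3 * (∫ s in (0:ℝ)..τ1, (v τ1 - v s) ^ 2)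
        + 9 / (v τ1) ^ 3 * (∫ s in (0:ℝ)..τ1, (w s) ^ 2 * (φ s) ^ 2)
        - 3 * b ^ 2
      = ν ^ 2 / α ^ 2 * γ * (2 * q + 1) ^ 2 / τ ^ 4 := by
  have hD : 0 < τ1 - τ0 := sub_pos.2 hτ01
  have hx : ∀ t ∈ Set.Icc τ0 τ1, 0 ≤ (τ1 - t) / (τ1 - τ0) := fun t ht =>
    div_nonneg (sub_nonneg.2 ht.2) hD.le
  have hφsq1 : ∀ t ∈ Set.Icc (0 : ℝ) τ0, φ t ^ 2 = α ^ 2 := fun t ht => by rw [hφ1 t ht]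
  have hφsq2 : ∀ t ∈ Set.Icc τ0 τ1,
      φ t ^ 2 = α ^ 2 * ((τ1 - t) / (τ1 - τ0)) ^ (2 * q) := fun t ht => by
    rw [hφ2 t ht, mul_pow, mul_comm 2 q, rpow_mul (hx t ht), rpow_two]
  have hv1 : ∀ s ∈ Set.Icc (0 : ℝ) τ0, v s = α ^ 2 * s := fun s hs => by
    rw [hv, intervalIntegral.integral_congr (g := fun _ => α ^ 2)]
    · simp [mul_comm]
    · intro t ht
      rw [Set.uIcc_of_le hs.1] at ht
      exact hφsq1 t ⟨ht.1, ht.2.trans hs.2⟩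
  have hw1 : ∀ s ∈ Set.Icc (0 : ℝ) τ0, w s = ρ * ν * (α * s) := fun s hs => by
    rw [hw, intervalIntegral.integral_congr (g := fun _ => α)]
    · simp [mul_comm]
    · intro t ht
      rw [Set.uIcc_of_le hs.1] at ht
      exact hφ1 t ⟨ht.1, ht.2.trans hs.2⟩
  have hv2 : ∀ s ∈ Set.Icc τ0 τ1, v s = α ^ 2 * (τ0 + (τ1 - τ0) / (2 * q + 1)
      * (1 - ((τ1 - s) / (τ1 - τ0)) ^ (2 * q + 1))) := fun s hs => by
    rw [hv, integral_eq_add_of_eqOn_Icc hτ0 hs.1 continuous_const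
      (continuous_const.fun_mul (continuous_sub_div_rpow τ1 (τ1 - τ0) (by positivity))) hφsq1
      (fun t ht => hφsq2 t ⟨ht.1, ht.2.trans hs.2⟩), intervalIntegral.integral_const_mul,
      integral_sub_div_rpow_s9 hτ01 (by positivity), intervalIntegral.integral_const, smul_eq_mul]
    ring
  have hw2 : ∀ s ∈ Set.Icc τ0 τ1, w s = ρ * ν * (α * (τ0 + (τ1 - τ0) / (q + 1)
      * (1 - ((τ1 - s) / (τ1 - τ0)) ^ (q + 1)))) := fun s hs => by
    rw [hw, integral_eq_add_of_eqOn_Icc hτ0 hs.1 continuous_const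
      (continuous_const.fun_mul (continuous_sub_div_rpow τ1 (τ1 - τ0) hq.le)) hφ1
      (fun t ht => hφ2 t ⟨ht.1, ht.2.trans hs.2⟩), intervalIntegral.integral_const_mul,
      integral_sub_div_rpow_s9 hτ01 hq.le, intervalIntegral.integral_const, smul_eq_mul]
    ring
  have hvτ1 : v τ1 = α ^ 2 * (τ / (2 * q + 1)) := by
    rw [hv2 τ1 ⟨hτ01.le, le_rfl⟩, sub_self, zero_div, zero_rpow (by positivity), hτ]
    field_simp
    ring
  have hI : ∫ s in (0:ℝ)..τ1, (v τ1 - v s) ^ 2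
      = α ^ 4 * (((τ / (2 * q + 1)) ^ 3 - ((τ1 - τ0) / (2 * q + 1)) ^ 3) / 3
        + ((τ1 - τ0) / (2 * q + 1)) ^ 2 * ((τ1 - τ0) / (4 * q + 3))) := by
    rw [integral_eq_add_of_eqOn_Icc (g₁ := fun s => α ^ 4 * (τ / (2 * q + 1) - s) ^ 2)
      (g₂ := fun s => α ^ 4 * ((τ1 - τ0) / (2 * q + 1)) ^ 2
        * ((τ1 - s) / (τ1 - τ0)) ^ (4 * q + 2)) hτ0 hτ01.le (by fun_prop)
      (continuous_const.fun_mul (continuous_sub_div_rpow τ1 (τ1 - τ0) (by positivity)))]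
    · rw [intervalIntegral.integral_const_mul, intervalIntegral.integral_const_mul,
        integral_sub_div_rpow_full hτ01 (by positivity),
        intervalIntegral.integral_comp_sub_left (fun x => x ^ 2), integral_pow]
      have hB : τ / (2 * q + 1) - τ0 = (τ1 - τ0) / (2 * q + 1) := by
        rw [hτ]
        field_simp
        ring
      rw [hB, show 4 * q + 2 + 1 = 4 * q + 3 by ring]
      push_cast
      ring
    · intro s hs
      rw [hvτ1, hv1 s hs]
      ring
    · intro s hs
      rw [hvτ1, hv2 s hs, show 4 * q + 2 = (2 * q + 1) * 2 by ring, rpow_mul (hx s hs), rpow_two,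
        hτ]
      field_simp
      ring
  have hJ : ∫ s in (0:ℝ)..τ1, (w s) ^ 2 * (φ s) ^ 2
      = ρ ^ 2 * ν ^ 2 * α ^ 4 * (τ0 ^ 3 / 3
        + ((τ0 + (τ1 - τ0) / (q + 1)) ^ 2 * ((τ1 - τ0) / (2 * q + 1))
          - 2 * (τ0 + (τ1 - τ0) / (q + 1)) * ((τ1 - τ0) / (q + 1)) * ((τ1 - τ0) / (3 * q + 2))
          + ((τ1 - τ0) / (q + 1)) ^ 2 * ((τ1 - τ0) / (4 * q + 3)))) := by
    have hc : ∀ c p : ℝ, 0 ≤ p → Continuous fun s => c * ((τ1 - s) / (τ1 - τ0)) ^ p :=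
      fun c p hp => continuous_const.fun_mul (continuous_sub_div_rpow τ1 (τ1 - τ0) hp)
    have hc1 := hc ((τ0 + (τ1 - τ0) / (q + 1)) ^ 2) (2 * q) (by positivity)
    have hc2 := hc (2 * (τ0 + (τ1 - τ0) / (q + 1)) * ((τ1 - τ0) / (q + 1))) (3 * q + 1)
      (by positivity)
    have hc3 := hc (((τ1 - τ0) / (q + 1)) ^ 2) (4 * q + 2) (by positivity)
    rw [integral_eq_add_of_eqOn_Icc (g₁ := fun s => ρ ^ 2 * ν ^ 2 * α ^ 4 * s ^ 2)
      (g₂ := fun s => ρ ^ 2 * ν ^ 2 * α ^ 4 *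
        ((τ0 + (τ1 - τ0) / (q + 1)) ^ 2 * ((τ1 - s) / (τ1 - τ0)) ^ (2 * q)
          - 2 * (τ0 + (τ1 - τ0) / (q + 1)) * ((τ1 - τ0) / (q + 1))
            * ((τ1 - s) / (τ1 - τ0)) ^ (3 * q + 1)
          + ((τ1 - τ0) / (q + 1)) ^ 2 * ((τ1 - s) / (τ1 - τ0)) ^ (4 * q + 2)))
      hτ0 hτ01.le (by fun_prop) (continuous_const.mul ((hc1.fun_sub hc2).add hc3))]
    · rw [intervalIntegral.integral_const_mul, intervalIntegral.integral_const_mul,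
        intervalIntegral.integral_add ((hc1.fun_sub hc2).intervalIntegrable _ _)
          (hc3.intervalIntegrable _ _),
        intervalIntegral.integral_sub (hc1.intervalIntegrable _ _) (hc2.intervalIntegrable _ _),
        intervalIntegral.integral_const_mul, intervalIntegral.integral_const_mul,
        intervalIntegral.integral_const_mul,
        integral_sub_div_rpow_full hτ01 (by positivity),
        integral_sub_div_rpow_full hτ01 (by positivity),
        integral_sub_div_rpow_full hτ01 (by positivity), integral_pow,
        show 4 * q + 2 + 1 = 4 * q + 3 by ring, show 3 * q + 1 + 1 = 3 * q + 2 by ring]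
      push_cast
      ring
    · intro s hs
      rw [hw1 s hs, hφ1 s hs]
      ring
    · intro s hs
      have e1 : ((τ1 - s) / (τ1 - τ0)) ^ (3 * q + 1)
          = ((τ1 - s) / (τ1 - τ0)) ^ (q + 1) * ((τ1 - s) / (τ1 - τ0)) ^ (2 * q) := by
        rw [← rpow_add_of_nonneg (hx s hs) (by positivity) (by positivity)]
        ring_nf
      have e2 : ((τ1 - s) / (τ1 - τ0)) ^ (4 * q + 2)
          = (((τ1 - s) / (τ1 - τ0)) ^ (q + 1)) ^ 2 * ((τ1 - s) / (τ1 - τ0)) ^ (2 * q) := by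
        rw [← rpow_two, ← rpow_mul (hx s hs),
          ← rpow_add_of_nonneg (hx s hs) (by positivity) (by positivity)]
        ring_nf
      rw [hw2 s hs, hφsq2 s hs, e1, e2]
      ring
  have hτpos : 0 < τ := by
    rw [hτ]
    have : 0 < τ1 := hτ0.trans_lt hτ01
    positivity
  have hτ1 : τ1 = τ - 2 * q * τ0 := by rw [hτ]; ring
  rw [hI, hJ, hvτ1, hb, hγ]
  clear hI hJ hvτ1 hv2 hw2 hv1 hw1 hφsq1 hφsq2 hx hv hw hφ1 hφ2 hb hγ hτ hD
  subst hτ1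
  field_simp
  ring
end

section
/- Define b = (νρ/α)·(2q+1)·(3τ² + 2qτ0² + τ1²)/(2τ²·(3q+2)), c = (ν²/α²)·γ·(2q+1)²/τ⁴, Δ² = α²·τ/(τ1·(2q+1)), and G = (ν²/Δ²)·(τ² + 2qτ0² + τ1²)/(2τ1τ(q+1)) − c. Then γ > 0 and c > 0, and the effective SABR parameters of Theorem 2 are obtained: ν̂² := Δ²·c = ν²·γ·(2q+1)/(τ³·τ1); ρ̂ := b/√c = ρ·(3τ² + 2qτ0² + τ1²)/(√γ·(6q+4)); and α̂² := Δ²·exp(Δ²·G·τ1/2) = (α²/(2q+1))·(τ/τ1)·exp(H·τ1/2), where H = ν²·(τ² + 2qτ0² + τ1²)/(2τ1τ(q+1)) − ν̂². -/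
open Real

/-- Combining the effective-medium quantities b, c, Δ², G yields the backward-looking
effective SABR parameters of Theorem 2 of the paper (case τ0 ≥ 0):
ν̂² = Δ²c = ν²γ(2q+1)/(τ³τ1), ρ̂ = b/√c = ρ(3τ² + 2qτ0² + τ1²)/(√γ(6q+4)),
α̂² = Δ² exp(Δ²Gτ1/2) = (α²/(2q+1))(τ/τ1) exp(Hτ1/2). -/
theorem stmt_11 (τ0 τ1 q α ν ρ τ γ b c D2 G H : ℝ)
    (hτ0 : 0 ≤ τ0) (hτ01 : τ0 < τ1) (hq : 0 < q) (hα : 0 < α) (hν : 0 < ν)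
    (hρ : ρ ∈ Set.Icc (-1 : ℝ) 1)
    (hτ : τ = 2 * q * τ0 + τ1)
    (hγ : γ = τ * (2 * τ ^ 3 + τ1 ^ 3 + (4 * q ^ 2 - 2 * q) * τ0 ^ 3 + 6 * q * τ0 ^ 2 * τ1)
            / ((4 * q + 3) * (2 * q + 1))
        + 3 * q * ρ ^ 2 * (τ1 - τ0) ^ 2
            * (3 * τ ^ 2 - τ1 ^ 2 + 5 * q * τ0 ^ 2 + 4 * τ0 * τ1)
            / ((4 * q + 3) * (3 * q + 2) ^ 2))
    (hb : b = ν * ρ / α * (2 * q + 1) * (3 * τ ^ 2 + 2 * q * τ0 ^ 2 + τ1 ^ 2)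
            / (2 * τ ^ 2 * (3 * q + 2)))
    (hc : c = ν ^ 2 / α ^ 2 * γ * (2 * q + 1) ^ 2 / τ ^ 4)
    (hD2 : D2 = α ^ 2 * τ / (τ1 * (2 * q + 1)))
    (hG : G = ν ^ 2 / D2 * (τ ^ 2 + 2 * q * τ0 ^ 2 + τ1 ^ 2)
            / (2 * τ1 * τ * (q + 1)) - c)
    (hH : H = ν ^ 2 * (τ ^ 2 + 2 * q * τ0 ^ 2 + τ1 ^ 2) / (2 * τ1 * τ * (q + 1))
            - ν ^ 2 * γ * (2 * q + 1) / (τ ^ 3 * τ1)) :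
    0 < γ
    ∧ 0 < c
    ∧ D2 * c = ν ^ 2 * γ * (2 * q + 1) / (τ ^ 3 * τ1)
    ∧ b / Real.sqrt c
        = ρ * (3 * τ ^ 2 + 2 * q * τ0 ^ 2 + τ1 ^ 2) / (Real.sqrt γ * (6 * q + 4))
    ∧ D2 * Real.exp (D2 * G * τ1 / 2)
        = α ^ 2 / (2 * q + 1) * (τ / τ1) * Real.exp (H * τ1 / 2) := by
  have hτ1 : 0 < τ1 := hτ0.trans_lt hτ01
  have hττ1 : τ1 ≤ τ := by
    have : 0 ≤ q * τ0 := by positivity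
    linarith
  have hτpos : 0 < τ := hτ1.trans_le hττ1
  have hγpos : 0 < γ := by
    have hcubic : 0 < 2 * τ ^ 3 + τ1 ^ 3 + (4 * q ^ 2 - 2 * q) * τ0 ^ 3
        + 6 * q * τ0 ^ 2 * τ1 := by
      have h : 0 ≤ 2 * q * τ0 ^ 2 * (3 * τ1 - τ0) :=
        mul_nonneg (by positivity) (by linarith)
      have h' : 0 < 2 * τ ^ 3 + τ1 ^ 3 + 4 * q ^ 2 * τ0 ^ 3 := by positivity
      linarith
    have hquad : 0 ≤ 3 * τ ^ 2 - τ1 ^ 2 + 5 * q * τ0 ^ 2 + 4 * τ0 * τ1 := by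
      have h : τ1 ^ 2 ≤ τ ^ 2 := by gcongr
      have h' : 0 ≤ 2 * τ ^ 2 + 5 * q * τ0 ^ 2 + 4 * τ0 * τ1 := by positivity
      linarith
    rw [hγ]
    positivity
  have hcpos : 0 < c := by
    rw [hc]
    positivity
  have hD2pos : 0 < D2 := by
    rw [hD2]
    positivity
  have hD2c : D2 * c = ν ^ 2 * γ * (2 * q + 1) / (τ ^ 3 * τ1) := by
    rw [hD2, hc]
    field_simp
  have hsqrt : √c = ν / α * (2 * q + 1) / τ ^ 2 * √γ := by
    rw [Real.sqrt_eq_iff_mul_self_eq hcpos.le (by positivity), hc]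
    have := Real.sq_sqrt hγpos.le
    field_simp
    rw [this]
  have hD2G : D2 * G = H := by
    rw [hG, mul_sub, hD2c, hH]
    field_simp
  refine ⟨hγpos, hcpos, hD2c, ?_, ?_⟩
  · have : 0 < √γ := Real.sqrt_pos.2 hγpos
    rw [hsqrt, hb]
    field_simp
    ring
  · rw [hD2G, hD2]
    field_simp
end

section
/- As q → ∞, the Theorem 2 effective parameters, viewed as functions of q > 0 with τ0, τ1, α, ν, ρ fixed, satisfy: ρ̂(q) := ρ·(3τ(q)² + 2qτ0² + τ1²)/(√(γ(q))·(6q+4)) → ρ; ν̂²(q) := ν²·γ(q)·(2q+1)/(τ(q)³·τ1) → ν²·τ0/τ1; and α̂²(q) := (α²/(2q+1))·(τ(q)/τ1)·exp(H(q)·τ1/2) → α²·τ0/τ1, where H(q) = ν²·(τ(q)² + 2qτ0² + τ1²)/(2τ1·τ(q)·(q+1)) − ν̂²(q). -/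
open Real Filter

/-- A function that agrees for large arguments with `F` evaluated at the inverse tends to `F 0`
at infinity as soon as `F` is continuous at `0`. -/
theorem tendsto_atTop_of_eq_comp_inv {f F : ℝ → ℝ} {L : ℝ} (hF : ContinuousAt F 0) (hL : F 0 = L)
    (h : ∀ q, 0 < q → f q = F q⁻¹) : Tendsto f atTop (nhds L) := by
  have hlim : Tendsto (fun q : ℝ => F q⁻¹) atTop (nhds L) :=
    hL ▸ hF.tendsto.comp tendsto_inv_atTop_zero
  refine hlim.congr' ?_
  filter_upwards [eventually_gt_atTop 0] with q hq
  exact (h q hq).symm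

/-- Limits as q → ∞ of the Theorem 2 effective SABR parameters:
ρ̂(q) → ρ, ν̂²(q) → ν²τ0/τ1, α̂²(q) → α²τ0/τ1. -/
theorem stmt_14 (τ0 τ1 α ν ρ : ℝ)
    (hτ0 : 0 < τ0) (hτ01 : τ0 < τ1) (hα : 0 < α) (hν : 0 < ν)
    (hρ : ρ ∈ Set.Icc (-1 : ℝ) 1)
    (τ γ νh2 H ρh αh2 : ℝ → ℝ)
    (hτ : ∀ q, τ q = 2 * q * τ0 + τ1)
    (hγ : ∀ q, γ q = τ q * (2 * (τ q) ^ 3 + τ1 ^ 3 + (4 * q ^ 2 - 2 * q) * τ0 ^ 3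
              + 6 * q * τ0 ^ 2 * τ1) / ((4 * q + 3) * (2 * q + 1))
        + 3 * q * ρ ^ 2 * (τ1 - τ0) ^ 2
            * (3 * (τ q) ^ 2 - τ1 ^ 2 + 5 * q * τ0 ^ 2 + 4 * τ0 * τ1)
            / ((4 * q + 3) * (3 * q + 2) ^ 2))
    (hνh2 : ∀ q, νh2 q = ν ^ 2 * γ q * (2 * q + 1) / ((τ q) ^ 3 * τ1))
    (hH : ∀ q, H q = ν ^ 2 * ((τ q) ^ 2 + 2 * q * τ0 ^ 2 + τ1 ^ 2)
            / (2 * τ1 * (τ q) * (q + 1)) - νh2 q)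
    (hρh : ∀ q, ρh q = ρ * (3 * (τ q) ^ 2 + 2 * q * τ0 ^ 2 + τ1 ^ 2)
            / (Real.sqrt (γ q) * (6 * q + 4)))
    (hαh2 : ∀ q, αh2 q = α ^ 2 / (2 * q + 1) * (τ q / τ1) * Real.exp (H q * τ1 / 2)) :
    Tendsto ρh atTop (nhds ρ)
    ∧ Tendsto νh2 atTop (nhds (ν ^ 2 * τ0 / τ1))
    ∧ Tendsto αh2 atTop (nhds (α ^ 2 * τ0 / τ1)) := by
  have hτ1 : 0 < τ1 := hτ0.trans hτ01
  -- `T` and `G` are `τ q / q` and `γ q / q ^ 2` as functions of `x = q⁻¹`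
  set T : ℝ → ℝ := fun x => 2 * τ0 + τ1 * x with hT
  set G : ℝ → ℝ := fun x =>
    T x * (2 * T x ^ 3 + τ1 ^ 3 * x ^ 3 + (4 * x - 2 * x ^ 2) * τ0 ^ 3 + 6 * x ^ 2 * τ0 ^ 2 * τ1)
        / ((4 + 3 * x) * (2 + x))
      + 3 * x ^ 2 * ρ ^ 2 * (τ1 - τ0) ^ 2
        * (3 * T x ^ 2 - τ1 ^ 2 * x ^ 2 + 5 * x * τ0 ^ 2 + 4 * τ0 * τ1 * x ^ 2)
        / ((4 + 3 * x) * (3 + 2 * x) ^ 2) with hG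
  have hT0 : T 0 = 2 * τ0 := by simp [hT]
  have hG0 : G 0 = (2 * τ0 ^ 2) ^ 2 := by
    simp only [hG, hT0]
    ring
  have hTc : ContinuousAt T 0 := by fun_prop
  have hGc : ContinuousAt G 0 := by
    refine ContinuousAt.add (ContinuousAt.div ?_ ?_ (by norm_num))
      (ContinuousAt.div ?_ ?_ (by norm_num)) <;> fun_prop
  have hτT : ∀ q, 0 < q → τ q = q * T q⁻¹ := by
    intro q hq
    rw [hτ, hT]
    field_simp
  have hTpos : ∀ q : ℝ, 0 < q → 0 < T q⁻¹ := by
    intro q hq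
    simp only [hT]
    positivity
  have hγG : ∀ q, 0 < q → γ q = q ^ 2 * G q⁻¹ := by
    intro q hq
    rw [hγ, hτT q hq]
    simp only [hG]
    generalize T q⁻¹ = t
    field_simp
  have hνlim : Tendsto νh2 atTop (nhds (ν ^ 2 * τ0 / τ1)) := by
    refine tendsto_atTop_of_eq_comp_inv
      (F := fun x => ν ^ 2 * G x * (2 + x) / (T x ^ 3 * τ1)) ?_ ?_ ?_
    · refine ContinuousAt.div (by fun_prop) (by fun_prop) ?_
      rw [hT0]
      positivity
    · simp only [hG0, hT0]
      field_simp
      ring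
    · intro q hq
      have := hTpos q hq
      rw [hνh2, hτT q hq, hγG q hq]
      field_simp
  have hHlim : Tendsto H atTop (nhds 0) := by
    have hfst : Tendsto (fun q => ν ^ 2 * ((τ q) ^ 2 + 2 * q * τ0 ^ 2 + τ1 ^ 2)
        / (2 * τ1 * (τ q) * (q + 1))) atTop (nhds (ν ^ 2 * τ0 / τ1)) := by
      refine tendsto_atTop_of_eq_comp_inv (F := fun x =>
        ν ^ 2 * (T x ^ 2 + 2 * x * τ0 ^ 2 + τ1 ^ 2 * x ^ 2) / (2 * τ1 * T x * (1 + x))) ?_ ?_ ?_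
      · refine ContinuousAt.div (by fun_prop) (by fun_prop) ?_
        rw [hT0]
        positivity
      · simp only [hT0]
        field_simp
        ring
      · intro q hq
        have := hTpos q hq
        simp only [hτT q hq]
        field_simp
    simpa [funext hH] using hfst.sub hνlim
  refine ⟨?_, hνlim, ?_⟩
  · refine tendsto_atTop_of_eq_comp_inv (F := fun x =>
      ρ * (3 * T x ^ 2 + 2 * x * τ0 ^ 2 + τ1 ^ 2 * x ^ 2) / (√(G x) * (6 + 4 * x))) ?_ ?_ ?_
    · refine ContinuousAt.div (by fun_prop) (by fun_prop) ?_
      rw [hG0, Real.sqrt_sq (by positivity)]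
      positivity
    · simp only [hG0, hT0]
      rw [Real.sqrt_sq (by positivity)]
      field_simp
      ring
    · intro q hq
      rw [hρh, hτT q hq, hγG q hq, Real.sqrt_mul (sq_nonneg q), Real.sqrt_sq hq.le]
      generalize √(G q⁻¹) = s
      field_simp
  · have hpre : Tendsto (fun q => α ^ 2 / (2 * q + 1) * (τ q / τ1)) atTop
        (nhds (α ^ 2 * τ0 / τ1)) := by
      refine tendsto_atTop_of_eq_comp_inv (F := fun x => α ^ 2 / (2 + x) * (T x / τ1)) ?_ ?_ ?_
      · refine ContinuousAt.mul (ContinuousAt.div ?_ ?_ (by norm_num)) ?_ <;> fun_prop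
      · simp only [hT0]
        field_simp
        ring
      · intro q hq
        simp only [hτT q hq]
        field_simp
    have hexp : Tendsto (fun q => Real.exp (H q * τ1 / 2)) atTop (nhds 1) := by
      simpa using ((hHlim.mul_const τ1).div_const 2).rexp
    simpa [funext hαh2] using hpre.mul hexp
end
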